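/- arXiv:2208.06447 — 8 statements merged into one kernel-verified Lean document; each statement's English description precedes it below -/
import Mathlib

section
/- Let θ ∈ (0,1), n_B ≥ 0, and n_S ≥ 0 be real. Then J_TMSV(n_S) ≤ n_S/(θ(n_B + 1 − θ)), i.e., the TMSV quantum Fisher information never exceeds the ultimate upper bound J_ub(n_S) = n_S/(θ(n_B + 1 − θ)); moreover the inequality is strict whenever n_B > 0 and n_S > 0. -/
/-- The TMSV quantum Fisher information never exceeds the ultimate upper bound
`J_ub(n_S) = n_S/(θ(n_B + 1 − θ))`, with strict inequality when `n_B > 0` and `n_S > 0`. -/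
theorem tmsv_qfi_le_ultimate_bound (θ nB nS : ℝ) (hθ : θ ∈ Set.Ioo (0:ℝ) 1)
    (hnB : 0 ≤ nB) (hnS : 0 ≤ nS) :
    nS * (nB + 1 + (1 - θ) * nS + nB * nS) /
        (θ * (nB + 1 - θ) * (nB + 1 + nS * (2 * nB + 1 - θ)))
      ≤ nS / (θ * (nB + 1 - θ)) ∧
    (0 < nB → 0 < nS →
      nS * (nB + 1 + (1 - θ) * nS + nB * nS) /
          (θ * (nB + 1 - θ) * (nB + 1 + nS * (2 * nB + 1 - θ)))
        < nS / (θ * (nB + 1 - θ))) := by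
  obtain ⟨h0, h1⟩ := hθ
  have hA : 0 < θ * (nB + 1 - θ) := mul_pos h0 (by linarith)
  have hD : 0 < nB + 1 + nS * (2 * nB + 1 - θ) := by
    have : 0 ≤ nS * (2 * nB + 1 - θ) := mul_nonneg hnS (by linarith)
    linarith
  -- Over the common denominator the numerators differ by exactly `nS * (nB * nS)`.
  have key : nS / (θ * (nB + 1 - θ)) - nS * (nB + 1 + (1 - θ) * nS + nB * nS) /
        (θ * (nB + 1 - θ) * (nB + 1 + nS * (2 * nB + 1 - θ)))
      = nS * (nB * nS) / (θ * (nB + 1 - θ) * (nB + 1 + nS * (2 * nB + 1 - θ))) := by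
    rw [← mul_div_mul_right nS _ hD.ne', ← sub_div]
    congr 1
    ring
  constructor
  · rw [← sub_nonneg, key]
    positivity
  · intro hB hS
    rw [← sub_pos, key]
    positivity
end

section
/- Let θ ∈ (0,1) and n_B > 0 be real. Then the photon Fisher-information efficiency ȷ_TMSV(n_S) = J_TMSV(n_S)/n_S is strictly decreasing as a function of n_S on (0, ∞). -/
/-- The photon Fisher-information efficiency `ȷ_TMSV(n_S) = J_TMSV(n_S)/n_S` is strictly
decreasing in `n_S` on `(0, ∞)` when `n_B > 0`. -/
theorem tmsv_pfie_strictAntiOn (θ nB : ℝ) (hθ : θ ∈ Set.Ioo (0:ℝ) 1) (hnB : 0 < nB) :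
    StrictAntiOn (fun nS : ℝ =>
        (nB + 1 + (1 - θ) * nS + nB * nS) /
          (θ * (nB + 1 - θ) * (nB + 1 + nS * (2 * nB + 1 - θ))))
      (Set.Ioi (0:ℝ)) := by
  obtain ⟨h0, h1⟩ := hθ
  have hc : 0 < θ * (nB + 1 - θ) := mul_pos h0 (by linarith)
  have hb : 0 < 2 * nB + 1 - θ := by linarith
  intro x hx y hy hxy
  have hx : 0 < x := hx
  have hy : 0 < y := hy
  have hd : 0 < y - x := sub_pos.2 hxy
  change _ / _ < _ / _
  rw [div_lt_div_iff₀ (by positivity) (by positivity)]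
  -- The cross-multiplied difference factors, because the slopes in `nS` of the numerator
  -- and of the last factor of the denominator differ by exactly `nB`.
  have key : 0 < θ * (nB + 1 - θ) * ((nB + 1) * nB * (y - x)) := by positivity
  linear_combination key
end

section
/- Let θ ∈ (0,1), n_B ≥ 0 and n_S > 0 be real. Then ȷ_TMSV(n_S) > 1/(2θ(n_B + 1)), i.e., the photon Fisher-information efficiency of the TMSV probe strictly exceeds that of a coherent-state probe, ȷ_Coh = 1/(2θ(n_B + 1)), for every positive signal photon number. -/
/-- The photon Fisher-information efficiency of the TMSV probe strictly exceeds that of a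
coherent-state probe, `ȷ_Coh = 1/(2θ(n_B + 1))`, for every positive signal photon number. -/
theorem tmsv_pfie_gt_coherent (θ nB nS : ℝ) (hθ : θ ∈ Set.Ioo (0:ℝ) 1)
    (hnB : 0 ≤ nB) (hnS : 0 < nS) :
    1 / (2 * θ * (nB + 1))
      < (nB + 1 + (1 - θ) * nS + nB * nS) /
          (θ * (nB + 1 - θ) * (nB + 1 + nS * (2 * nB + 1 - θ))) := by
  obtain ⟨h0, h1⟩ := hθ
  have hc : 0 < nB + 1 - θ := by linarith
  have hd : 0 < 2 * nB + 1 - θ := by linarith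
  rw [div_lt_div_iff₀ (by positivity) (by positivity)]
  -- With `a = nB + 1` and `c = a - θ`, the cross-multiplied difference is
  -- `θ * (a * (a + θ) + c * nS * (1 + θ))`, a sum of positive terms.
  have key : 0 < θ * ((nB + 1) * (nB + 1 + θ) + (nB + 1 - θ) * nS * (1 + θ)) := by positivity
  linear_combination key
end

section
/- Let θ ∈ (0,1), n_B ≥ 0 and G > 1 be real. Define, for n_S > 0, F_G(n_S) = ((G−1)n_S + √(G(G−1)n_S(n_S+1)/θ))² / (n̄_OPA(n_S)·(n̄_OPA(n_S)+1)), the classical Fisher information of the OPA receiver at gain G. Then the limit as n_S → 0⁺ of F_G(n_S)/n_S equals G/(θ(n_B + 1)(G(1 + n_B) − n_B)). -/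
/-!
For `nS > 0` a factor `√nS` comes out of both terms of the numerator, so `F_G(nS) / nS` equals
`((G - 1) * √nS + √(G * (G - 1) * (nS + 1) / θ)) ^ 2 / (nOPA * (nOPA + 1))`. This expression is
continuous at `nS = 0`, where `nOPA = (G - 1) * (nB + 1) > 0` and the numerator is
`G * (G - 1) / θ`; the factor `G - 1` cancels.
-/

open Filter Topology

/-- The mean photon number at the output of the OPA receiver with gain `G` applied to the
return of a TMSV probe. -/
noncomputable def nOPA (θ nB G nS : ℝ) : ℝ :=
  G * nS + (G - 1) * (nB + 1 + θ * nS) + 2 * Real.sqrt (G * (G - 1) * θ * nS * (nS + 1))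

/-- Low-transmitted-power limit of the per-photon classical Fisher information of the OPA
receiver at gain `G`: it equals `G/(θ(n_B + 1)(G(1 + n_B) − n_B))`. -/
theorem opa_cfi_low_power_limit (θ nB G : ℝ) (hθ : θ ∈ Set.Ioo (0:ℝ) 1)
    (hnB : 0 ≤ nB) (hG : 1 < G) :
    Tendsto (fun nS : ℝ =>
        (((G - 1) * nS + Real.sqrt (G * (G - 1) * nS * (nS + 1) / θ)) ^ 2 /
          (nOPA θ nB G nS * (nOPA θ nB G nS + 1))) / nS)
      (𝓝[>] (0:ℝ)) (𝓝 (G / (θ * (nB + 1) * (G * (1 + nB) - nB)))) := by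
  obtain ⟨hθ0, -⟩ := hθ
  have hG1 : 0 < G - 1 := by linarith
  have hG0 : 0 < G := by linarith
  have hB : 0 < nB + 1 := by linarith
  have hn0 : nOPA θ nB G 0 = (G - 1) * (nB + 1) := by simp [nOPA]
  have hpos : 0 < (G - 1) * (nB + 1) := mul_pos hG1 hB
  have hD : 0 < G * (1 + nB) - nB := by linarith
  have hcont : Continuous (nOPA θ nB G) := by
    unfold nOPA
    fun_prop
  have hden : nOPA θ nB G 0 * (nOPA θ nB G 0 + 1) ≠ 0 := by
    rw [hn0]
    positivity
  have hlim : ContinuousAt (fun nS : ℝ =>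
      ((G - 1) * Real.sqrt nS + Real.sqrt (G * (G - 1) * (nS + 1) / θ)) ^ 2 /
        (nOPA θ nB G nS * (nOPA θ nB G nS + 1))) 0 := by
    refine ContinuousAt.div ?_ ?_ hden
    · exact Continuous.continuousAt (by fun_prop)
    · exact Continuous.continuousAt (by fun_prop)
  have hval : ((G - 1) * Real.sqrt 0 + Real.sqrt (G * (G - 1) * (0 + 1) / θ)) ^ 2 /
        (nOPA θ nB G 0 * (nOPA θ nB G 0 + 1)) =
      G / (θ * (nB + 1) * (G * (1 + nB) - nB)) := by
    have hs : 0 ≤ G * (G - 1) * (0 + 1) / θ := by positivity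
    have hD' : (G - 1) * (nB + 1) + 1 = G * (1 + nB) - nB := by ring
    rw [Real.sqrt_zero, mul_zero, zero_add, Real.sq_sqrt hs, hn0, hD']
    have := hD.ne'
    have := hG1.ne'
    field_simp
    ring
  have ht := hlim.tendsto.mono_left (nhdsWithin_le_nhds (s := Set.Ioi 0))
  rw [hval] at ht
  refine ht.congr' ?_
  filter_upwards [self_mem_nhdsWithin] with x hx
  have hx : 0 < x := hx
  have hsplit : Real.sqrt (G * (G - 1) * x * (x + 1) / θ) =
      Real.sqrt x * Real.sqrt (G * (G - 1) * (x + 1) / θ) := by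
    rw [← Real.sqrt_mul hx.le]
    congr 1
    ring
  have hnum : ((G - 1) * x + Real.sqrt (G * (G - 1) * x * (x + 1) / θ)) ^ 2 =
      x * ((G - 1) * Real.sqrt x + Real.sqrt (G * (G - 1) * (x + 1) / θ)) ^ 2 := by
    rw [hsplit]
    obtain ⟨s, hs, rfl⟩ : ∃ s : ℝ, 0 ≤ s ∧ x = s ^ 2 :=
      ⟨Real.sqrt x, Real.sqrt_nonneg x, (Real.sq_sqrt hx.le).symm⟩
    rw [Real.sqrt_sq hs]
    ring
  rw [hnum, mul_div_assoc x, mul_div_cancel_left₀ _ hx.ne']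
end

section
/- Let n_B > 0 and θ ∈ [0, 1] be real. Then for every natural number k, p_K(k) = (n_B(n_B+1) + θ(k − n_B))·n_B^{k−1}·(n_B+1)^{−(k+2)} is nonnegative, and the series ∑_{k=0}^∞ p_K(k) converges with sum equal to 1; i.e., p_K is a probability mass function on the natural numbers. -/
/-! With `r = nB / (nB + 1)`, the `k`-th term is a linear combination of `r ^ k` and `k * r ^ k`
with coefficients `(nB * (nB + 1) - θ * nB) / (nB * (nB + 1) ^ 2)` and `θ / (nB * (nB + 1) ^ 2)`.
Since `∑ r ^ k = nB + 1` and `∑ k * r ^ k = nB * (nB + 1)`, the `θ`-contributions cancel and the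
total is `1`. Nonnegativity holds because `θ ≤ 1` gives
`nB * (nB + 1) - θ * nB ≥ nB ^ 2`. -/

/-- The photon-count distribution for a single-photon Fock-state probe of a lossy
thermal-noise channel is a genuine probability mass function on ℕ. -/
theorem single_photon_pmf (nB θ : ℝ) (hnB : 0 < nB) (hθ : θ ∈ Set.Icc (0:ℝ) 1) :
    (∀ k : ℕ, 0 ≤ (nB * (nB + 1) + θ * ((k : ℝ) - nB)) * nB ^ ((k : ℤ) - 1) *
        (nB + 1) ^ (-((k : ℤ) + 2))) ∧
    HasSum (fun k : ℕ => (nB * (nB + 1) + θ * ((k : ℝ) - nB)) * nB ^ ((k : ℤ) - 1) *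
        (nB + 1) ^ (-((k : ℤ) + 2))) 1 := by
  obtain ⟨h0, h1⟩ := hθ
  have hp : 0 < nB + 1 := by linarith
  refine ⟨fun k => ?_, ?_⟩
  · have hk : 0 ≤ θ * (k : ℝ) := by positivity
    have hc : 0 ≤ nB * (nB + 1) + θ * ((k : ℝ) - nB) := by nlinarith
    positivity
  · have hr0 : 0 ≤ nB / (nB + 1) := by positivity
    have hr1 : nB / (nB + 1) < 1 := by rw [div_lt_one hp]; linarith
    have hsub : 1 - nB / (nB + 1) = (nB + 1)⁻¹ := by field_simp; ring
    have hgeom := hasSum_geometric_of_lt_one hr0 hr1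
    have hmean := hasSum_coe_mul_geometric_of_norm_lt_one (r := nB / (nB + 1))
      (by rwa [Real.norm_of_nonneg hr0])
    rw [hsub] at hgeom hmean
    have hsum := (hgeom.mul_left ((nB * (nB + 1) - θ * nB) / (nB * (nB + 1) ^ 2))).add
      (hmean.mul_left (θ / (nB * (nB + 1) ^ 2)))
    convert! hsum using 1
    · funext k
      have e : (nB + 1) ^ ((k : ℤ) + 2) = (nB + 1) ^ k * (nB + 1) ^ 2 := by
        exact_mod_cast pow_add (nB + 1) k 2
      rw [zpow_sub_one₀ hnB.ne', zpow_neg, e, zpow_natCast, div_pow]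
      field_simp
      ring
    · field_simp
      ring
end

section
/- Let n_B > 0 and θ ∈ [0, 1] be real. Then the series ∑_{k=0}^∞ k·p_K(k), with p_K(k) = (n_B(n_B+1) + θ(k − n_B))·n_B^{k−1}·(n_B+1)^{−(k+2)}, converges and its sum equals θ + n_B. -/
/-!
With `r = nB / (nB + 1)`, which lies in `[0, 1)`, the `k`-th term is `r ^ k / (nB * (nB + 1) ^ 2)`
times the quadratic polynomial `(nB * (nB + 1) - θ * nB) * k + θ * k ^ 2`. The series is thus a
combination of the geometric moments `∑ k * r ^ k = nB * (nB + 1)` and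
`∑ k ^ 2 * r ^ k = nB * (nB + 1) * (2 * nB + 1)`; the second comes from the binomial series
`∑ (k + 2).choose 2 * r ^ k = (1 - r)⁻¹ ^ 3`.
-/

/-- The mean photon count for a single-photon Fock-state probe of a lossy thermal-noise
channel equals `θ + n_B`. -/
theorem single_photon_mean (nB θ : ℝ) (hnB : 0 < nB) (hθ : θ ∈ Set.Icc (0:ℝ) 1) :
    HasSum (fun k : ℕ => (k : ℝ) *
        ((nB * (nB + 1) + θ * ((k : ℝ) - nB)) * nB ^ ((k : ℤ) - 1) *
          (nB + 1) ^ (-((k : ℤ) + 2))))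
      (θ + nB) := by
  have hN : nB ≠ 0 := hnB.ne'
  have hN1 : nB + 1 ≠ 0 := by positivity
  obtain ⟨r, hr⟩ : ∃ r, r = nB / (nB + 1) := ⟨_, rfl⟩
  have hr1 : 1 - r = (nB + 1)⁻¹ := by rw [hr]; field_simp; ring
  have hnorm : ‖r‖ < 1 := by
    rw [hr, Real.norm_of_nonneg (by positivity), div_lt_one (by positivity)]
    linarith
  have h0 : HasSum (fun k : ℕ => r ^ k) (nB + 1) := by
    have h := hasSum_geometric_of_norm_lt_one hnorm
    rwa [hr1, inv_inv] at h
  have h1 : HasSum (fun k : ℕ => (k : ℝ) * r ^ k) (nB * (nB + 1)) := by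
    have h := hasSum_coe_mul_geometric_of_norm_lt_one hnorm
    have e : r / (1 - r) ^ 2 = nB * (nB + 1) := by rw [hr1, hr]; field_simp
    rwa [e] at h
  have hc : HasSum (fun k : ℕ => ((k + 2).choose 2 : ℝ) * r ^ k) ((nB + 1) ^ 3) := by
    have h := hasSum_choose_mul_geometric_of_norm_lt_one 2 hnorm
    have e : 1 / (1 - r) ^ (2 + 1) = (nB + 1) ^ 3 := by simp [hr1]
    rwa [e] at h
  have h2 : HasSum (fun k : ℕ => (k : ℝ) ^ 2 * r ^ k) (nB * (nB + 1) * (2 * nB + 1)) := by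
    -- `k ^ 2 = 2 * (k + 2).choose 2 - 3 * k - 2`
    convert! ((hc.mul_left 2).sub (h1.mul_left 3)).sub (h0.mul_left 2) using 1
    · ext k
      rw [Nat.cast_choose_two]
      push_cast
      ring
    · ring
  convert! ((h1.mul_left (nB * (nB + 1) - θ * nB)).add (h2.mul_left θ)).mul_left
    (nB * (nB + 1) ^ 2)⁻¹ using 1
  · ext k
    rw [zpow_sub_one₀ hN, zpow_neg, zpow_add₀ hN1, zpow_natCast, zpow_natCast, hr, div_pow,
      zpow_ofNat]
    field_simp
    ring
  · field_simp
    ring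
end

section
/- Let θ ∈ [0, 1], n_S ≥ 0 and n_B ≥ 0 be real. With w₁₁ = n_S + 1/2, w₂₂ = n_B + θ·n_S + 1/2, w₁₂ = √(θ·n_S(n_S+1)), S = 1 + n_B + n_S + θ·n_S, a = n_B² + (1 + n_S(1−θ))² + 2n_B(1 + n_S + θ·n_S), μ = √(S/(2√a) + 1/2) and ν = −√(S/(2√a) − 1/2), the off-diagonal entry after squeezing vanishes: w₁₂·(μ² + ν²) + (w₁₁ + w₂₂)·μ·ν = 0. -/
/-!
Since `S² - a = 4 θ nS (nS + 1) = 4 w12²`, we have `√a ≤ S`, so both radicands are nonnegative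
and `μν = -√(S² / (4a) - 1/4) = -w12 / √a`, while `μ² + ν² = S / √a`. As `w11 + w22 = S`, the two
terms are `w12 S / √a` and `-S w12 / √a`.
-/

/-- The off-diagonal entry of the TMSV channel-output covariance matrix vanishes after
the two-mode squeezing with parameters `μ`, `ν`:
`w₁₂(μ² + ν²) + (w₁₁ + w₂₂)μν = 0`. -/
theorem tmsv_offdiagonal_vanishes (θ nS nB w11 w22 w12 S a μ ν : ℝ)
    (hθ : θ ∈ Set.Icc (0:ℝ) 1) (hnS : 0 ≤ nS) (hnB : 0 ≤ nB)
    (hw11 : w11 = nS + 1 / 2)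
    (hw22 : w22 = nB + θ * nS + 1 / 2)
    (hw12 : w12 = Real.sqrt (θ * nS * (nS + 1)))
    (hS : S = 1 + nB + nS + θ * nS)
    (ha : a = nB ^ 2 + (1 + nS * (1 - θ)) ^ 2 + 2 * nB * (1 + nS + θ * nS))
    (hμ : μ = Real.sqrt (S / (2 * Real.sqrt a) + 1 / 2))
    (hν : ν = -Real.sqrt (S / (2 * Real.sqrt a) - 1 / 2)) :
    w12 * (μ ^ 2 + ν ^ 2) + (w11 + w22) * μ * ν = 0 := by
  obtain ⟨hθ0, hθ1⟩ := hθ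
  have hθn : 0 ≤ θ * nS := mul_nonneg hθ0 hnS
  have hθn' : 0 ≤ nS * (1 - θ) := mul_nonneg hnS (by linarith)
  have ha0 : 0 < a := by rw [ha]; positivity
  have hS0 : 0 < S := by rw [hS]; positivity
  have hw0 : 0 ≤ w12 := hw12 ▸ Real.sqrt_nonneg _
  have hw2 : w12 ^ 2 = θ * nS * (nS + 1) := by
    rw [hw12, Real.sq_sqrt (by positivity)]
  have hSa : S ^ 2 = a + 4 * w12 ^ 2 := by rw [hw2, hS, ha]; ring
  have hsum : w11 + w22 = S := by rw [hw11, hw22, hS]; ring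
  set r := Real.sqrt a with hr
  have hr0 : 0 < r := Real.sqrt_pos.2 ha0
  have hr2 : r ^ 2 = a := Real.sq_sqrt ha0.le
  have hrS : r ≤ S := by
    rw [hr]
    exact Real.sqrt_le_iff.2 ⟨hS0.le, by nlinarith [sq_nonneg w12]⟩
  have hp : 0 ≤ S / (2 * r) + 1 / 2 := by positivity
  have hm : 0 ≤ S / (2 * r) - 1 / 2 := by
    have h : S / (2 * r) - 1 / 2 = (S - r) / (2 * r) := by field_simp
    rw [h]
    exact div_nonneg (by linarith) (by positivity)
  have hμν : μ * ν = -(w12 / r) := by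
    rw [hμ, hν, mul_neg, ← Real.sqrt_mul hp]
    congr 1
    have h : (S / (2 * r) + 1 / 2) * (S / (2 * r) - 1 / 2) = (w12 / r) ^ 2 := by
      field_simp
      linarith
    rw [h, Real.sqrt_sq (by positivity)]
  have hsq : μ ^ 2 + ν ^ 2 = S / r := by
    rw [hμ, hν, neg_sq, Real.sq_sqrt hp, Real.sq_sqrt hm]
    field_simp
    ring
  rw [hsum, mul_assoc, hμν, hsq]
  ring
end

section
/- Let C, D, E be real numbers with C + D > 2|E|, and set R = √((C+D)² − 4E²), T₁ = (R + C − D)/2, T₂ = (R − C + D)/2, and λ = (1/2)·log((C + D + 2E)/R). Then cosh(2λ) = (C+D)/R and sinh(2λ) = 2E/R, and the system of equations C = T₁·cosh²λ + T₂·sinh²λ, D = T₁·sinh²λ + T₂·cosh²λ, E = (T₁ + T₂)·sinh λ·cosh λ is satisfied. -/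
/-!
Since `R ^ 2 = (C + D + 2E)(C + D - 2E)` with both factors positive, `exp (2λ) = (C + D + 2E) / R`
has inverse `(C + D - 2E) / R`; half the sum and half the difference of the two are `cosh (2λ)` and
`sinh (2λ)`. The three equations follow from the double-angle formulas, using `T₁ + T₂ = R` and
`T₁ - T₂ = C - D`.
-/

/-- Solution of the squeezing equations in the derivation of the eigenbasis of the
symmetric logarithmic derivative (Appendix B.4 of the paper). -/
theorem sld_squeezing_equations (C D E R T₁ T₂ lam : ℝ)
    (hCD : 2 * |E| < C + D)
    (hR : R = Real.sqrt ((C + D) ^ 2 - 4 * E ^ 2))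
    (hT1 : T₁ = (R + C - D) / 2)
    (hT2 : T₂ = (R - C + D) / 2)
    (hlam : lam = (1 / 2) * Real.log ((C + D + 2 * E) / R)) :
    Real.cosh (2 * lam) = (C + D) / R ∧
    Real.sinh (2 * lam) = 2 * E / R ∧
    C = T₁ * Real.cosh lam ^ 2 + T₂ * Real.sinh lam ^ 2 ∧
    D = T₁ * Real.sinh lam ^ 2 + T₂ * Real.cosh lam ^ 2 ∧
    E = (T₁ + T₂) * Real.sinh lam * Real.cosh lam := by
  have hE := abs_lt.mp (show |E| < (C + D) / 2 by linarith)
  have hp : 0 < C + D + 2 * E := by linarith [hE.1]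
  have hm : 0 < C + D - 2 * E := by linarith [hE.2]
  have hfac : (C + D) ^ 2 - 4 * E ^ 2 = (C + D + 2 * E) * (C + D - 2 * E) := by ring
  have hpos : 0 < (C + D) ^ 2 - 4 * E ^ 2 := hfac ▸ mul_pos hp hm
  have hR0 : 0 < R := hR ▸ Real.sqrt_pos.mpr hpos
  have hR2 : R ^ 2 = (C + D + 2 * E) * (C + D - 2 * E) := by
    rw [hR, Real.sq_sqrt hpos.le, hfac]
  have hexp : Real.exp (2 * lam) = (C + D + 2 * E) / R := by
    rw [hlam, ← mul_assoc, mul_one_div_cancel two_ne_zero, one_mul,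
      Real.exp_log (div_pos hp hR0)]
  have hexpneg : Real.exp (-(2 * lam)) = (C + D - 2 * E) / R := by
    rw [Real.exp_neg, hexp, inv_div, div_eq_div_iff hp.ne' hR0.ne']
    linear_combination hR2
  have hcosh : Real.cosh (2 * lam) = (C + D) / R := by
    rw [Real.cosh_eq, hexp, hexpneg]
    ring
  have hsinh : Real.sinh (2 * lam) = 2 * E / R := by
    rw [Real.sinh_eq, hexp, hexpneg]
    ring
  have hc : R * (Real.cosh lam ^ 2 + Real.sinh lam ^ 2) = C + D := by
    rw [← Real.cosh_two_mul, hcosh, mul_div_cancel₀ _ hR0.ne']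
  have hs : R * (2 * Real.sinh lam * Real.cosh lam) = 2 * E := by
    rw [← Real.sinh_two_mul, hsinh, mul_div_cancel₀ _ hR0.ne']
  have h1 := Real.cosh_sq_sub_sinh_sq lam
  refine ⟨hcosh, hsinh, ?_, ?_, ?_⟩ <;> rw [hT1, hT2]
  · linear_combination -(1 / 2) * hc - (C - D) / 2 * h1
  · linear_combination -(1 / 2) * hc + (C - D) / 2 * h1
  · linear_combination -(1 / 2) * hs
end
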